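/- Let G = (V,E) be a graph, S = (S(v))_{v∈V} a label assignment, u ∈ V, and let S′ be the label assignment obtained from S by replacing S(u) by some other subset S′(u) ⊆ ℕ. Let i be a nonnegative integer and let w be a vertex whose colour at time i with respect to S differs from its colour at time i with respect to S′. Then there exists a path u = x₀, x₁, …, x_m = w in G and labels l₀ < l₁ < ⋯ (all at most i), such that for each j < m the vertex x_j gained or lost the relevant label l_j when S was replaced by S′ (i.e., l_j is relevant for x_j with respect to exactly one of S and S′), and these relevant labels are strictly increasing along the path from u towards w. -/

import Mathlib

open MeasureTheory ProbabilityTheory Filter Set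

namespace InducedForest

variable {V : Type*}

/-- Label `i` is *relevant* for vertex `v` (w.r.t. the label assignment `S`):
either `i = 0` and `0 ∈ S v`, or `i ∈ S v`, no `j < i` is relevant for `v`, and
there is a unique neighbour of `v` having a relevant label strictly smaller than `i`. -/
def Relevant (G : SimpleGraph V) (S : V → Set ℕ) (i : ℕ) : V → Prop :=
  Nat.strongRecOn i (fun i ih v =>
    (i = 0 ∧ 0 ∈ S v) ∨
    (i ∈ S v ∧ (∀ j, (h : j < i) → ¬ ih j h v) ∧
      (∃! u, G.Adj v u ∧ ∃ j, ∃ h : j < i, ih j h u)))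

/-- `v` has some relevant label `≤ l`, i.e. `v ∈ R_{≤ l}`. -/
def RelevantLe (G : SimpleGraph V) (S : V → Set ℕ) (l : ℕ) (v : V) : Prop :=
  ∃ i ≤ l, Relevant G S i v

inductive Colour | white | blue | orange | purple
deriving DecidableEq

open Classical in
/-- The colour of `u` at time `l`. -/
noncomputable def colourAt (G : SimpleGraph V) (S : V → Set ℕ) (l : ℕ) (u : V) : Colour :=
  if RelevantLe G S l u then Colour.purple
  else if ∀ v, G.Adj u v → ¬ RelevantLe G S l v then Colour.white
  else if ∃! v, G.Adj u v ∧ RelevantLe G S l v then Colour.blue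
  else Colour.orange

/-- The set `W_l` of white vertices at time `l`. -/
def White (G : SimpleGraph V) (S : V → Set ℕ) (l : ℕ) : Set V :=
  {u | ¬ RelevantLe G S l u ∧ ∀ v, G.Adj u v → ¬ RelevantLe G S l v}

/-- The set `B_l` of blue vertices at time `l`. -/
def Blue (G : SimpleGraph V) (S : V → Set ℕ) (l : ℕ) : Set V :=
  {u | ¬ RelevantLe G S l u ∧ ∃! v, G.Adj u v ∧ RelevantLe G S l v}

/-!
A change of a relevant label propagates locally and forwards in time: whether `k` is relevant for
`v` depends only on `S v` and on the relevant labels smaller than `k` of `v` and its neighbours,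
and a colour at time `i` depends only on the relevant labels at most `i` in the closed
neighbourhood. Tracing a change back to its cause therefore yields a walk with strictly increasing
labels that starts at a vertex whose label set was replaced. Whenever the walk would revisit a
vertex, it is cut off at the earlier visit, so that it remains a path.
-/

/-- `l` labels every vertex of the walk `p` except its last one by a label below `n` that is
admissible for this vertex in the sense of `C`, and these labels strictly increase along `p`.
Only the values of `l` below the length of `p` matter. -/
structure IsIncreasingLabelling {L : Type*} [Preorder L] {G : SimpleGraph V} {u v : V}
    (C : L → V → Prop) (n : L) (p : G.Walk u v) (l : ℕ → L) : Prop where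
  lt : ∀ j < p.length, l j < n
  admissible : ∀ j < p.length, C (l j) (p.getVert j)
  strictMonoOn : StrictMonoOn l (Iio p.length)

/-- Some path from `u` to `v` carries strictly increasing labels below `n`, admissible in the sense
of `C`, on all its vertices but the last. In the application, `C k v` says that `v` gained or lost
the relevant label `k`. -/
def HasIncreasingPath {L : Type*} [Preorder L] (G : SimpleGraph V) (C : L → V → Prop) (n : L)
    (u v : V) : Prop :=
  ∃ (p : G.Walk u v) (l : ℕ → L), p.IsPath ∧ IsIncreasingLabelling C n p l

section IncreasingPaths

variable {L : Type*} [Preorder L] {G : SimpleGraph V} {C : L → V → Prop} {k n : L} {u v w : V}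

namespace IsIncreasingLabelling

variable {p : G.Walk u v} {l : ℕ → L}

theorem mono (h : IsIncreasingLabelling C k p l) (hkn : k ≤ n) : IsIncreasingLabelling C n p l :=
  ⟨fun j hj => (h.lt j hj).trans_le hkn, h.admissible, h.strictMonoOn⟩

theorem of_append_left {q : G.Walk v w} (h : IsIncreasingLabelling C n (p.append q) l) :
    IsIncreasingLabelling C n p l := by
  have hlen : p.length ≤ (p.append q).length := by simp
  refine ⟨fun j hj => h.lt j (hj.trans_le hlen), fun j hj => ?_,
    h.strictMonoOn.mono (Iio_subset_Iio hlen)⟩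
  simpa only [SimpleGraph.Walk.getVert_append, if_pos hj] using h.admissible j (hj.trans_le hlen)

theorem concat (h : IsIncreasingLabelling C k p l) (hC : C k v) (hkn : k < n) (hvw : G.Adj v w) :
    IsIncreasingLabelling C n (p.concat hvw) (Function.update l p.length k) := by
  have hlast {j : ℕ} (hj : j < (p.concat hvw).length) : j < p.length ∨ j = p.length :=
    Nat.lt_succ_iff_lt_or_eq.mp (by simpa using hj)
  refine ⟨fun j hj => ?_, fun j hj => ?_, fun i _ j hj hij => ?_⟩
  · obtain hj | rfl := hlast hj
    · simpa [hj.ne] using (h.lt j hj).trans hkn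
    · simpa using hkn
  · obtain hj | rfl := hlast hj
    · simpa [hj, hj.ne, SimpleGraph.Walk.concat_eq_append, SimpleGraph.Walk.getVert_append]
        using h.admissible j hj
    · simpa [SimpleGraph.Walk.concat_eq_append, SimpleGraph.Walk.getVert_append] using hC
  · obtain hj | rfl := hlast hj
    · simpa [hj.ne, (hij.trans hj).ne] using h.strictMonoOn (hij.trans hj) hj hij
    · simpa [hij.ne] using h.lt i hij

end IsIncreasingLabelling

namespace HasIncreasingPath

theorem refl (n : L) (u : V) : HasIncreasingPath G C n u u :=
  ⟨.nil, fun _ => n, .nil, by simp, by simp, by simp [StrictMonoOn]⟩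

theorem mono (h : HasIncreasingPath G C k u v) (hkn : k ≤ n) : HasIncreasingPath G C n u v := by
  obtain ⟨p, l, hp, hl⟩ := h
  exact ⟨p, l, hp, hl.mono hkn⟩

theorem trans_adj (h : HasIncreasingPath G C k u v) (hC : C k v) (hkn : k < n)
    (hvw : G.Adj v w) : HasIncreasingPath G C n u w := by
  obtain ⟨p, l, hp, hl⟩ := h
  by_cases hw : w ∈ p.support
  · obtain ⟨q, r, hq, -, rfl⟩ := hp.mem_support_iff_exists_append.mp hw
    exact ⟨q, l, hq, hl.of_append_left.mono hkn.le⟩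
  · exact ⟨p.concat hvw, _, hp.concat hw hvw, hl.concat hC hkn hvw⟩

theorem trans_eq_or_adj (h : HasIncreasingPath G C k u v) (hC : C k v) (hkn : k < n)
    (hvw : v = w ∨ G.Adj v w) : HasIncreasingPath G C n u w := by
  obtain rfl | hvw := hvw
  · exact h.mono hkn.le
  · exact h.trans_adj hC hkn hvw

theorem exists_vertex_label_sequences (h : HasIncreasingPath G C n u v) :
    ∃ (m : ℕ) (x : ℕ → V) (l : ℕ → L),
      x 0 = u ∧ x m = v ∧
      (∀ j, j < m → G.Adj (x j) (x (j + 1))) ∧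
      (∀ j j', j ≤ m → j' ≤ m → x j = x j' → j = j') ∧
      (∀ j, j < m → l j < n ∧ C (l j) (x j)) ∧
      (∀ j, j + 1 < m → l j < l (j + 1)) := by
  obtain ⟨p, l, hp, hl⟩ := h
  exact ⟨p.length, p.getVert, l, p.getVert_zero, p.getVert_length,
    fun _ hj => p.adj_getVert_succ hj,
    fun _ _ hj hj' heq => hp.getVert_injOn hj hj' heq,
    fun j hj => ⟨hl.lt j hj, hl.admissible j hj⟩,
    fun j hj => hl.strictMonoOn (j.lt_succ_self.trans hj) hj j.lt_succ_self⟩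

end HasIncreasingPath

end IncreasingPaths

/-- The vertex `v` gains or loses the relevant label `k` when `S` is replaced by `S'`. -/
def RelevanceChanges (G : SimpleGraph V) (S S' : V → Set ℕ) (k : ℕ) (v : V) : Prop :=
  ¬ (Relevant G S k v ↔ Relevant G S' k v)

section Locality

variable {G : SimpleGraph V} {S S' : V → Set ℕ} {n i : ℕ} {v w : V}

theorem relevant_iff :
    Relevant G S n v ↔
      (n = 0 ∧ 0 ∈ S v) ∨
      (n ∈ S v ∧ (∀ k < n, ¬ Relevant G S k v) ∧
        ∃! y, G.Adj v y ∧ ∃ k < n, Relevant G S k y) := by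
  conv_lhs => rw [Relevant, Nat.strongRecOn_eq]
  simp only [exists_prop, Relevant]

theorem relevant_congr (hS : S v = S' v)
    (hrel : ∀ k < n, ∀ y, y = v ∨ G.Adj y v → (Relevant G S k y ↔ Relevant G S' k y)) :
    Relevant G S n v ↔ Relevant G S' n v := by
  have hself : (∀ k < n, ¬ Relevant G S k v) ↔ ∀ k < n, ¬ Relevant G S' k v :=
    forall₂_congr fun k hk => not_congr (hrel k hk v (.inl rfl))
  have hnbr : (∃! y, G.Adj v y ∧ ∃ k < n, Relevant G S k y) ↔
      ∃! y, G.Adj v y ∧ ∃ k < n, Relevant G S' k y :=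
    existsUnique_congr fun y => and_congr_right fun hvy =>
      exists_congr fun k => and_congr_right fun hk => hrel k hk y (.inr hvy.symm)
  rw [relevant_iff (S := S), relevant_iff (S := S'), hS, hself, hnbr]

theorem colourAt_congr
    (hrel : ∀ y, y = w ∨ G.Adj y w → (RelevantLe G S i y ↔ RelevantLe G S' i y)) :
    colourAt G S i w = colourAt G S' i w := by
  classical
  have hself : RelevantLe G S i w ↔ RelevantLe G S' i w := hrel w (.inl rfl)
  have hnbr (y : V) (hwy : G.Adj w y) : RelevantLe G S i y ↔ RelevantLe G S' i y :=
    hrel y (.inr hwy.symm)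
  have hwhite : (∀ y, G.Adj w y → ¬ RelevantLe G S i y) ↔
      ∀ y, G.Adj w y → ¬ RelevantLe G S' i y :=
    forall₂_congr fun y hwy => not_congr (hnbr y hwy)
  have hblue : (∃! y, G.Adj w y ∧ RelevantLe G S i y) ↔
      ∃! y, G.Adj w y ∧ RelevantLe G S' i y :=
    existsUnique_congr fun y => and_congr_right (hnbr y)
  simp only [colourAt, hself, hwhite, hblue]

theorem RelevanceChanges.labels_ne_or_exists_lt (h : RelevanceChanges G S S' n v) :
    S v ≠ S' v ∨ ∃ k < n, ∃ y, (y = v ∨ G.Adj y v) ∧ RelevanceChanges G S S' k y := by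
  contrapose! h
  exact not_not.mpr (relevant_congr h.1 fun k hk y hy => not_not.mp (h.2 k hk y hy))

theorem exists_relevanceChanges_of_colourAt_ne (h : colourAt G S i w ≠ colourAt G S' i w) :
    ∃ k ≤ i, ∃ y, (y = w ∨ G.Adj y w) ∧ RelevanceChanges G S S' k y := by
  contrapose! h
  exact colourAt_congr fun y hy =>
    exists_congr fun k => and_congr_right fun hk => not_not.mp (h k hk y hy)

theorem RelevanceChanges.exists_hasIncreasingPath (h : RelevanceChanges G S S' n v) :
    ∃ u, S u ≠ S' u ∧ HasIncreasingPath G (RelevanceChanges G S S') n u v := by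
  induction n using Nat.strong_induction_on generalizing v with
  | _ n ih =>
    obtain hv | ⟨k, hkn, y, hyv, hy⟩ := h.labels_ne_or_exists_lt
    · exact ⟨v, hv, .refl n v⟩
    · obtain ⟨u, hu, huy⟩ := ih k hkn hy
      exact ⟨u, hu, huy.trans_eq_or_adj hy hkn hyv⟩

end Locality

theorem exists_path_of_colour_change_general
    (G : SimpleGraph V) (S S' : V → Set ℕ) (i : ℕ) (w : V)
    (hcol : colourAt G S i w ≠ colourAt G S' i w) :
    ∃ u, S u ≠ S' u ∧
      ∃ (m : ℕ) (x : ℕ → V) (l : ℕ → ℕ),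
        x 0 = u ∧ x m = w ∧
        (∀ j, j < m → G.Adj (x j) (x (j + 1))) ∧
        (∀ j j', j ≤ m → j' ≤ m → x j = x j' → j = j') ∧
        (∀ j, j < m → l j ≤ i ∧
          ¬ (Relevant G S (l j) (x j) ↔ Relevant G S' (l j) (x j))) ∧
        (∀ j, j + 1 < m → l j < l (j + 1)) := by
  obtain ⟨k, hki, y, hyw, hy⟩ := exists_relevanceChanges_of_colourAt_ne hcol
  obtain ⟨u, hu, huy⟩ := hy.exists_hasIncreasingPath
  have huw : HasIncreasingPath G (RelevanceChanges G S S') (i + 1) u w :=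
    huy.trans_eq_or_adj hy (Nat.lt_succ_of_le hki) hyw
  refine ⟨u, hu, ?_⟩
  simpa only [Nat.lt_succ_iff, RelevanceChanges] using huw.exists_vertex_label_sequences

/-- If changing the label set of `u` (only) changes the colour of `w` at
time `i`, then there is a path from `u` to `w` along which each vertex except possibly `w`
gained or lost a relevant label `≤ i`, these labels being strictly increasing along the
path from `u` towards `w`. -/
theorem exists_path_of_colour_change
    (G : SimpleGraph V) (S S' : V → Set ℕ) (u : V)
    (hS' : ∀ v, v ≠ u → S' v = S v)
    (i : ℕ) (w : V)
    (hcol : colourAt G S i w ≠ colourAt G S' i w) :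
    ∃ (m : ℕ) (x : ℕ → V) (l : ℕ → ℕ),
      x 0 = u ∧ x m = w ∧
      (∀ j, j < m → G.Adj (x j) (x (j + 1))) ∧
      (∀ j j', j ≤ m → j' ≤ m → x j = x j' → j = j') ∧
      (∀ j, j < m → l j ≤ i ∧
        ¬ (Relevant G S (l j) (x j) ↔ Relevant G S' (l j) (x j))) ∧
      (∀ j, j + 1 < m → l j < l (j + 1)) := by
  obtain ⟨u', hu', hpath⟩ := exists_path_of_colour_change_general G S S' i w hcol
  rwa [show u' = u from by_contra fun hne => hu' (hS' u' hne).symm] at hpath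

end InducedForest
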